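/- Let k = ℤ[β_{a,b} : (a,b) ∈ ℕ² ∖ {(0,0)}] and let p(x,y) = 1 + Σ_{(a,b)≠(0,0)} β_{a,b} xᵃyᵇ ∈ k⟦x,y⟧ be the generic power series with constant term 1. Define in k⟦x₁,x₂⟧: E₁ = x₁ + x₂, E₂ = x₁x₂, ρ₀ and ρ₁ the unique series with (x₁ − x₂)·ρ₀ = p(x₁,x₂) − p(x₂,x₁) and (x₁ − x₂)·ρ₁ = x₁·p(x₁,x₂) − x₂·p(x₂,x₁), and the unit ρ = −p(x₁,x₂)·p(x₂,x₁). Let R ⊂ k⟦x₁,x₂⟧ be the subring generated by E₁, E₂, ρ₀, ρ₁, ρ and ρ⁻¹. Then the family 𝓑 = {ρ₁^{n₁}·ρ₀^{n₂}·ρ^{n₃} : n₁ ∈ {0,1}, n₂ ∈ ℕ, n₃ ∈ ℤ} is a basis of R as a module over the subring ℤ[E₁,E₂], and R is isomorphic to the localization ℤ[E₁,E₂,ρ₀,ρ₁][(ρ₁² − E₁ρ₁ρ₀ + E₂ρ₀²)⁻¹] of a polynomial ring in four variables at the single element ρ₁² − E₁ρ₁ρ₀ + E₂ρ₀² (which equals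 −ρ). -/

import Mathlib

noncomputable section
open MvPowerSeries

/-- The polynomial ring `ℤ[β_{a,b} : (a,b) ≠ (0,0)]`. -/
abbrev BetaRing : Type := MvPolynomial {ab : ℕ × ℕ // ab ≠ (0, 0)} ℤ

/-- The generic power series `p(x,y) = 1 + Σ β_{a,b} xᵃyᵇ` with constant term `1`. -/
def genericP : MvPowerSeries (Fin 2) BetaRing :=
  fun d => if h : (d 0, d 1) = (0, 0) then 1 else MvPolynomial.X ⟨(d 0, d 1), h⟩

/-- The automorphism of `k⟦x₁,x₂⟧` exchanging the two variables. -/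
def swapPS {k : Type*} [CommRing k] (f : MvPowerSeries (Fin 2) k) : MvPowerSeries (Fin 2) k :=
  fun d => MvPowerSeries.coeff (Finsupp.equivMapDomain (Equiv.swap 0 1) d) f

/-- Substitution of a family of power series (each with zero constant term) into a
multivariate power series, via the standard coefficient formula. -/
def psSubst {k : Type*} [CommRing k] {σ τ : Type*} [Fintype σ] [DecidableEq σ]
    (a : σ → MvPowerSeries τ k) (f : MvPowerSeries σ k) : MvPowerSeries τ k :=
  fun e => ∑ d ∈ Finset.Iic (Finsupp.equivFunOnFinite.symm fun _ : σ => e.sum fun _ m => m),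
    (MvPowerSeries.coeff d f) * MvPowerSeries.coeff e (∏ i, a i ^ d i)

/-- `E₁ = x₁ + x₂`. -/
def E₁ : MvPowerSeries (Fin 2) BetaRing := X 0 + X 1
/-- `E₂ = x₁·x₂`. -/
def E₂ : MvPowerSeries (Fin 2) BetaRing := X 0 * X 1

/-- Membership in the subring `ℤ⟦E₁,E₂⟧ ⊂ k⟦x₁,x₂⟧`: power series in `E₁, E₂` with
integer coefficients. -/
def InZE₁E₂ (f : MvPowerSeries (Fin 2) BetaRing) : Prop :=
  ∃ g : MvPowerSeries (Fin 2) ℤ,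
    f = psSubst ![E₁, E₂] (MvPowerSeries.map (Int.castRingHom BetaRing) g)

/-!
Since `x₁ ≠ x₂`, the defining equations of `ρ₀` and `ρ₁` give `p(x₁, x₂) = ρ₁ - x₂ ρ₀` and
`p(x₂, x₁) = ρ₁ - x₁ ρ₀`, so that `-ρ = ρ₁² - E₁ ρ₁ ρ₀ + E₂ ρ₀²` is a norm form. Conversely, any
symmetric series `f₀`, `f₁` with `f₁(0) = 1` arise as `ρ₀`, `ρ₁` of the series `f₁ - x₂ f₀`, which
is a specialization of the generic one. Specializing `(ρ₀, ρ₁)` to `(s, 1 + E₁ t)` with `s`, `t`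
indeterminates shows that `E₁, E₂, ρ₀, ρ₁` are algebraically independent over `ℤ`. Thus
`ℤ[E₁, E₂, ρ₀, ρ₁]` is a polynomial ring, `R` inverts the norm form in it, and expanding polynomials
in `ρ₁` in base `ρ`, which has degree `2` and leading coefficient `-1`, yields the basis `𝓑`.
-/

section AdicExpansion

open Polynomial (aevalAeval)
open scoped Polynomial.Bivariate

variable {A : Type*} [CommRing A]

/-- The sequence `X ^ (n % d) * q ^ (n / d)`, `d = deg q`: a polynomial expanded along it is written
in base `q`. When `d = 0`, Lean's `n % 0 = n` and `n / 0 = 0` make it the sequence of monomials. -/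
def adicSequence [IsDomain A] (q : Polynomial A) : Polynomial.Sequence A where
  elems' n := Polynomial.X ^ (n % q.natDegree) * q ^ (n / q.natDegree)
  degree_eq' n := by
    rcases eq_or_ne q 0 with rfl | hq
    · simp
    · rw [Polynomial.degree_mul, Polynomial.degree_X_pow, Polynomial.degree_pow,
        Polynomial.degree_eq_natDegree hq, nsmul_eq_mul]
      exact_mod_cast Nat.mod_add_div' n q.natDegree

theorem isUnit_leadingCoeff_adicSequence [IsDomain A] {q : Polynomial A}
    (hq : IsUnit q.leadingCoeff) (n : ℕ) : IsUnit (adicSequence q n).leadingCoeff := by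
  simpa [adicSequence] using hq.pow (n / q.natDegree)

theorem exists_basis_pow_mul_pow_mul_pow [IsDomain A] {q : A[X][Y]} (hq : IsUnit q.leadingCoeff)
    {d : ℕ} [NeZero d] (hd : q.natDegree = d) :
    ∃ b : Module.Basis (Fin d × ℕ × ℕ) A A[X][Y],
      ∀ m, b m = Y ^ (m.1 : ℕ) * Polynomial.C Polynomial.X ^ m.2.1 * q ^ m.2.2 := by
  let e : ℕ × ℕ ≃ Fin d × ℕ × ℕ :=
    ((Equiv.refl ℕ).prodCongr (Nat.divModEquiv d)).trans
      ((Equiv.prodAssoc ℕ ℕ (Fin d)).symm.trans (Equiv.prodComm _ _))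
  let b := (Polynomial.basisMonomials A).smulTower
    ((adicSequence q).basis (isUnit_leadingCoeff_adicSequence hq))
  refine ⟨b.reindex e, fun ⟨i, j, k⟩ ↦ ?_⟩
  have hmod : (k * d + i) % d = (i : ℕ) := Nat.mul_add_mod_of_lt i.isLt
  have hdiv : (k * d + i) / d = k := by
    rw [Nat.add_comm, Nat.add_mul_div_right _ _ (NeZero.pos d), Nat.div_eq_of_lt i.isLt, zero_add]
  have hb : b (j, k * d + i) = Polynomial.C Polynomial.X ^ j * (Y ^ (i : ℕ) * q ^ k) := by
    simp [b, adicSequence, hd, hmod, hdiv, Polynomial.smul_eq_C_mul,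
      ← Polynomial.X_pow_eq_monomial]
  rw [Module.Basis.reindex_apply, show e.symm (i, j, k) = (j, k * d + i) from rfl, hb]
  ring

variable {S : Type*} [CommRing S]

/-- The family `y ^ i * x ^ j * u ^ k` with `i < d`, `j ∈ ℕ` and `k ∈ ℤ`; the family `𝓑` is the
case `d = 2`, `x = ρ₀`, `y = ρ₁`, `u = ρ`. -/
def adicFamily (d : ℕ) (x y : S) (u : Sˣ) (m : Fin d × ℕ × ℤ) : S :=
  y ^ (m.1 : ℕ) * x ^ m.2.1 * ((u ^ m.2.2 : Sˣ) : S)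

variable [Algebra A S] {x y : S} {u : Sˣ} {q : A[X][Y]} {d : ℕ}

theorem aevalAeval_mul_inv_pow_eq_adicFamily (hu : (u : S) = aevalAeval x y q) (N : ℕ)
    (m : Fin d × ℕ × ℕ) :
    aevalAeval x y (Y ^ (m.1 : ℕ) * Polynomial.C Polynomial.X ^ m.2.1 * q ^ m.2.2) *
      ((u⁻¹ ^ N : Sˣ) : S) = adicFamily d x y u (m.1, m.2.1, m.2.2 - N) := by
  have hpow : (u : S) ^ m.2.2 * ((u⁻¹ ^ N : Sˣ) : S) = ((u ^ (m.2.2 - N : ℤ) : Sˣ) : S) := by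
    rw [zpow_sub, zpow_natCast, zpow_natCast, inv_pow, Units.val_mul, Units.val_pow_eq_pow_val]
  rw [map_mul, map_mul, map_pow, map_pow, map_pow, ← hu, mul_assoc, hpow, adicFamily,
    Polynomial.aevalAeval_X, Polynomial.aevalAeval_Y]

variable [IsDomain A] [NeZero d]

theorem mem_span_adicFamily_of_mul_pow_eq (hq : IsUnit q.leadingCoeff) (hd : q.natDegree = d)
    (hu : (u : S) = aevalAeval x y q) {r : S} {N : ℕ} {f : A[X][Y]}
    (hr : r * (u : S) ^ N = aevalAeval x y f) :
    r ∈ Submodule.span A (Set.range (adicFamily d x y u)) := by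
  obtain ⟨b, hb⟩ := exists_basis_pow_mul_pow_mul_pow hq hd
  let L : A[X][Y] →ₗ[A] S :=
    LinearMap.mulRight A ((u⁻¹ ^ N : Sˣ) : S) ∘ₗ (aevalAeval x y).toLinearMap
  have hL : Submodule.span A (Set.range (L ∘ b)) ≤
      Submodule.span A (Set.range (adicFamily d x y u)) := by
    refine Submodule.span_mono ?_
    rintro _ ⟨m, rfl⟩
    exact ⟨_, (hb m ▸ aevalAeval_mul_inv_pow_eq_adicFamily hu N m).symm⟩
  have hrL : r = L f := by
    simp [L, ← hr, mul_assoc, ← mul_pow]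
  rw [hrL]
  refine hL ?_
  rw [Set.range_comp, Submodule.span_image, b.span_eq]
  exact ⟨f, trivial, rfl⟩

theorem aevalAeval_injective {A S : Type*} [CommRing A] [CommRing S] [Algebra A S] {x y : S}
    (hxy : AlgebraicIndependent A ![x, y]) : Function.Injective (aevalAeval (R := A) x y) := by
  have hcomp : aevalAeval (R := A) x y = (MvPolynomial.aeval ![x, y]).comp
      (Polynomial.Bivariate.equivMvPolynomial A).toAlgHom := by
    ext <;> simp
  rw [hcomp, AlgHom.coe_comp]
  exact Function.Injective.comp hxy (Polynomial.Bivariate.equivMvPolynomial A).injective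

theorem linearIndependent_adicFamily (hxy : AlgebraicIndependent A ![x, y])
    (hq : IsUnit q.leadingCoeff) (hd : q.natDegree = d) (hu : (u : S) = aevalAeval x y q) :
    LinearIndependent A (adicFamily d x y u) := by
  obtain ⟨b, hb⟩ := exists_basis_pow_mul_pow_mul_pow hq hd
  rw [linearIndependent_iff_finset_linearIndependent]
  intro s
  -- Multiplication by `u ^ N` makes the finitely many exponents of `u` natural numbers.
  obtain ⟨N, hN⟩ : ∃ N : ℕ, ∀ m ∈ s, 0 ≤ m.2.2 + N := by
    refine ⟨∑ m ∈ s, m.2.2.natAbs, fun m hm ↦ ?_⟩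
    have := Finset.single_le_sum (f := fun m ↦ m.2.2.natAbs) (fun _ _ ↦ Nat.zero_le _) hm
    lia
  let L : A[X][Y] →ₗ[A] S :=
    LinearMap.mulRight A ((u⁻¹ ^ N : Sˣ) : S) ∘ₗ (aevalAeval x y).toLinearMap
  have hL : LinearMap.ker L = ⊥ := LinearMap.ker_eq_bot.mpr
    ((Units.mulRight_bijective _).injective.comp (aevalAeval_injective hxy))
  let shift (m : s) : Fin d × ℕ × ℕ := (m.1.1, m.1.2.1, (m.1.2.2 + N).toNat)
  have hshift : Function.Injective shift := by
    rintro ⟨⟨i, j, k⟩, hm⟩ ⟨⟨i', j', k'⟩, hm'⟩ h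
    have := hN _ hm
    have := hN _ hm'
    simp only [shift, Prod.mk.injEq] at h
    simp only [Subtype.mk.injEq, Prod.mk.injEq]
    exact ⟨h.1, h.2.1, by lia⟩
  have hfamily : adicFamily d x y u ∘ (↑) = L ∘ b ∘ shift := by
    ext m
    have hm := hN m m.2
    have hLb : (L ∘ b ∘ shift) m = adicFamily d x y u (m.1.1, m.1.2.1, (shift m).2.2 - N) :=
      (congrArg L (hb (shift m))).trans (aevalAeval_mul_inv_pow_eq_adicFamily hu N (shift m))
    rw [hLb, Int.toNat_of_nonneg hm, add_sub_cancel_right]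
    rfl
  rw [hfamily]
  exact (b.linearIndependent.comp shift hshift).map' L hL

end AdicExpansion

section AdjoinInv

variable {k S : Type*} [CommRing k] [CommRing S] [Algebra k S]

theorem mem_adjoin_union_unit_inv_iff {s : Set S} {u : Sˣ} (hu : (u : S) ∈ Algebra.adjoin k s)
    {r : S} : r ∈ Algebra.adjoin k (s ∪ {(u : S), ((u⁻¹ : Sˣ) : S)}) ↔
      ∃ n : ℕ, r * (u : S) ^ n ∈ Algebra.adjoin k s := by
  refine ⟨fun hr ↦ ?_, fun ⟨n, hn⟩ ↦ ?_⟩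
  · induction hr using Algebra.adjoin_induction with
    | mem a ha =>
      rcases ha with ha | rfl | rfl
      · exact ⟨0, by simpa using Algebra.subset_adjoin ha⟩
      · exact ⟨0, by simpa using hu⟩
      · exact ⟨1, by simp⟩
    | algebraMap c => exact ⟨0, by simp⟩
    | add a b _ _ iha ihb =>
      obtain ⟨m, hm⟩ := iha
      obtain ⟨n, hn⟩ := ihb
      refine ⟨m + n, ?_⟩
      convert add_mem (mul_mem hm (pow_mem hu n)) (mul_mem hn (pow_mem hu m)) using 1
      ring
    | mul a b _ _ iha ihb =>
      obtain ⟨m, hm⟩ := iha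
      obtain ⟨n, hn⟩ := ihb
      refine ⟨m + n, ?_⟩
      convert mul_mem hm hn using 1
      ring
  · have hinv : ((u⁻¹ : Sˣ) : S) ∈ Algebra.adjoin k (s ∪ {(u : S), ((u⁻¹ : Sˣ) : S)}) :=
      Algebra.subset_adjoin (by simp)
    have hr := mul_mem (Algebra.adjoin_mono Set.subset_union_left hn) (pow_mem hinv n)
    rwa [mul_assoc, ← mul_pow, u.mul_inv, one_pow, mul_one] at hr

theorem exists_localizationAway_ringHom {P : Type*} [CommRing P] (f : P →+* S)
    (hf : Function.Injective f) {q : P} {u : Sˣ} (hu : f q = u) :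
    ∃ φ : Localization.Away q →+* S, (∀ g, φ (algebraMap P _ g) = f g) ∧
      Function.Injective φ ∧ ∀ r, r ∈ Set.range φ ↔ ∃ n : ℕ, r * (u : S) ^ n ∈ Set.range f := by
  have hq : IsUnit (f q) := hu ▸ u.isUnit
  let φ : Localization.Away q →+* S := IsLocalization.Away.lift q hq
  have hφ (g : P) : φ (algebraMap P _ g) = f g := IsLocalization.Away.lift_eq q hq g
  have hφu (n : ℕ) : φ (algebraMap P _ q) ^ n = (u : S) ^ n := by rw [hφ, hu]
  refine ⟨φ, hφ, ?_, fun r ↦ ⟨?_, ?_⟩⟩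
  · rw [injective_iff_map_eq_zero]
    intro z hz
    obtain ⟨n, a, ha⟩ := IsLocalization.Away.surj q z
    have ha' : f a = 0 := by rw [← hφ, ← ha, map_mul, hz, zero_mul]
    rw [(map_eq_zero_iff f hf).mp ha', map_zero] at ha
    exact ((IsLocalization.Away.algebraMap_isUnit q).pow n).mul_left_eq_zero.mp ha
  · rintro ⟨z, rfl⟩
    obtain ⟨n, a, ha⟩ := IsLocalization.Away.surj q z
    exact ⟨n, a, by rw [← hφu, ← map_pow, ← map_mul, ha, hφ]⟩
  · rintro ⟨n, a, ha⟩
    obtain ⟨v, hv⟩ := IsLocalization.Away.algebraMap_isUnit (S := Localization.Away q) q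
    let z := algebraMap P (Localization.Away q) a * ((v⁻¹ ^ n : (Localization.Away q)ˣ) : _)
    have hz : z * (v : Localization.Away q) ^ n = algebraMap P _ a := by
      simp [z, mul_assoc, ← mul_pow]
    refine ⟨z, (u.isUnit.pow n).mul_right_cancel ?_⟩
    calc φ z * (u : S) ^ n = φ (z * (v : Localization.Away q) ^ n) := by
          rw [map_mul φ z, map_pow, hv, hφu]
      _ = f a := by rw [hz, hφ]
      _ = r * (u : S) ^ n := ha

theorem mul_neg_pow_mem_iff {R σ : Type*} [Ring R] [SetLike σ R] [NegMemClass σ R] {T : σ}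
    {r a : R} {n : ℕ} : r * (-a) ^ n ∈ T ↔ r * a ^ n ∈ T := by
  obtain h | h := neg_one_pow_eq_or R n <;> simp [neg_pow a, h]

end AdjoinInv

section NormForm

open Polynomial (aevalAeval)
open scoped Polynomial.Bivariate

/-- The norm form `Y² - e₁ X Y + e₂ X²`, that is `(Y - x₁ X) (Y - x₂ X)` when `e₁ = x₁ + x₂` and
`e₂ = x₁ x₂`. -/
def normForm {A : Type*} [CommRing A] (e₁ e₂ : A) : A[X][Y] :=
  Y ^ 2 - Polynomial.C (Polynomial.C e₁ * Polynomial.X) * Y +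
    Polynomial.C (Polynomial.C e₂ * Polynomial.X ^ 2)

theorem natDegree_normForm {A : Type*} [CommRing A] [Nontrivial A] (e₁ e₂ : A) :
    (normForm e₁ e₂).natDegree = 2 := by
  unfold normForm
  compute_degree!

theorem monic_normForm {A : Type*} [CommRing A] (e₁ e₂ : A) : (normForm e₁ e₂).Monic := by
  nontriviality A
  unfold normForm
  monicity!

theorem aevalAeval_normForm {A S : Type*} [CommRing A] [CommRing S] [Algebra A S] (e₁ e₂ : A)
    (x y : S) : aevalAeval x y (normForm e₁ e₂) =
      y ^ 2 - algebraMap A S e₁ * y * x + algebraMap A S e₂ * x ^ 2 := by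
  have hC (a : A) : aevalAeval x y (Polynomial.C (Polynomial.C a)) = algebraMap A S a :=
    (aevalAeval x y).commutes a
  simp only [normForm, map_add, map_sub, map_mul, map_pow, hC, Polynomial.aevalAeval_X,
    Polynomial.aevalAeval_Y]
  ring

theorem algebraicIndependent_quadruple_iff {k S : Type*} [CommRing k] [CommRing S] [Algebra k S]
    {e₁ e₂ x y : S} : AlgebraicIndependent k ![e₁, e₂, x, y] ↔
      AlgebraicIndependent k ![e₁, e₂] ∧
        AlgebraicIndependent (Algebra.adjoin k {e₁, e₂}) ![x, y] := by
  have hsum : AlgebraicIndependent k (Sum.elim ![x, y] ![e₁, e₂]) ↔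
      AlgebraicIndependent k ![e₁, e₂, x, y] := by
    refine algebraicIndependent_equiv' ((Equiv.sumComm _ _).trans finSumFinEquiv) ?_
    ext i
    rcases i with i | i <;> fin_cases i <;> rfl
  have hrange : Set.range ![e₁, e₂] = {e₁, e₂} := by
    simp only [Matrix.range_cons, Matrix.range_empty, Set.union_empty, Set.singleton_union]
  rw [← hsum, AlgebraicIndependent.sumElim_iff, hrange]

variable {k S : Type*} [CommRing k] [CommRing S] [Algebra k S] {e₁ e₂ x y : S} {u : Sˣ}

theorem val_mem_adjoin_of_eq_neg_normForm
    (hu : (u : S) = -(y ^ 2 - e₁ * y * x + e₂ * x ^ 2)) :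
    (u : S) ∈ Algebra.adjoin k {e₁, e₂, x, y} := by
  have hmem {a : S} (ha : a ∈ ({e₁, e₂, x, y} : Set S)) : a ∈ Algebra.adjoin k {e₁, e₂, x, y} :=
    Algebra.subset_adjoin ha
  rw [hu]
  exact neg_mem (add_mem (sub_mem (pow_mem (hmem (by simp)) 2)
    (mul_mem (mul_mem (hmem (by simp)) (hmem (by simp))) (hmem (by simp))))
    (mul_mem (hmem (by simp)) (pow_mem (hmem (by simp)) 2)))

theorem exists_aevalAeval_eq_of_mem_adjoin {r : S}
    (hr : r ∈ Algebra.adjoin k {e₁, e₂, x, y}) :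
    ∃ f : (Algebra.adjoin k {e₁, e₂})[X][Y], aevalAeval x y f = r := by
  let A := Algebra.adjoin k {e₁, e₂}
  have hle : Algebra.adjoin k {e₁, e₂, x, y} ≤
      ((aevalAeval (R := A) x y).restrictScalars k).range := by
    rw [Algebra.adjoin_le_iff]
    simp only [Set.insert_subset_iff, Set.singleton_subset_iff]
    refine ⟨?_, ?_, ?_, ?_⟩
    · exact ⟨Polynomial.C (Polynomial.C ⟨e₁, Algebra.subset_adjoin (by simp)⟩), by simp⟩
    · exact ⟨Polynomial.C (Polynomial.C ⟨e₂, Algebra.subset_adjoin (by simp)⟩), by simp⟩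
    · exact ⟨Polynomial.C Polynomial.X, Polynomial.aevalAeval_X ..⟩
    · exact ⟨Y, Polynomial.aevalAeval_Y ..⟩
  exact hle hr

theorem exists_val_eq_aevalAeval_of_eq_neg_normForm {A : Type*} [CommRing A] [Nontrivial A]
    [Algebra A S] {a₁ a₂ : A}
    (hu : (u : S) = -(y ^ 2 - algebraMap A S a₁ * y * x + algebraMap A S a₂ * x ^ 2)) :
    ∃ q : A[X][Y], IsUnit q.leadingCoeff ∧ q.natDegree = 2 ∧ (u : S) = aevalAeval x y q := by
  refine ⟨-normForm a₁ a₂, ?_, ?_, ?_⟩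
  · rw [Polynomial.leadingCoeff_neg, monic_normForm a₁ a₂]
    exact isUnit_one.neg
  · rw [Polynomial.natDegree_neg, natDegree_normForm]
  · rw [map_neg, aevalAeval_normForm, hu]

theorem mem_span_adicFamily_of_mem_adjoin [IsDomain S]
    (hu : (u : S) = -(y ^ 2 - e₁ * y * x + e₂ * x ^ 2)) {r : S}
    (hr : r ∈ Algebra.adjoin k ({e₁, e₂, x, y} ∪ {(u : S), ((u⁻¹ : Sˣ) : S)})) :
    r ∈ Submodule.span (Algebra.adjoin k {e₁, e₂}) (Set.range (adicFamily 2 x y u)) := by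
  obtain ⟨n, hn⟩ :=
    (mem_adjoin_union_unit_inv_iff (val_mem_adjoin_of_eq_neg_normForm hu)).mp hr
  obtain ⟨f, hf⟩ := exists_aevalAeval_eq_of_mem_adjoin hn
  obtain ⟨q, hq, hd, hqu⟩ := exists_val_eq_aevalAeval_of_eq_neg_normForm
    (a₁ := (⟨e₁, Algebra.subset_adjoin (Set.mem_insert _ _)⟩ : Algebra.adjoin k {e₁, e₂}))
    (a₂ := ⟨e₂, Algebra.subset_adjoin (Set.mem_insert_of_mem _ rfl)⟩) hu
  exact mem_span_adicFamily_of_mul_pow_eq hq hd hqu hf.symm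

theorem linearIndependent_adicFamily_of_eq_neg_normForm [IsDomain S]
    (h : AlgebraicIndependent k ![e₁, e₂, x, y])
    (hu : (u : S) = -(y ^ 2 - e₁ * y * x + e₂ * x ^ 2)) :
    LinearIndependent (Algebra.adjoin k {e₁, e₂}) (adicFamily 2 x y u) := by
  obtain ⟨q, hq, hd, hqu⟩ := exists_val_eq_aevalAeval_of_eq_neg_normForm
    (a₁ := (⟨e₁, Algebra.subset_adjoin (Set.mem_insert _ _)⟩ : Algebra.adjoin k {e₁, e₂}))
    (a₂ := ⟨e₂, Algebra.subset_adjoin (Set.mem_insert_of_mem _ rfl)⟩) hu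
  exact linearIndependent_adicFamily (algebraicIndependent_quadruple_iff.mp h).2 hq hd hqu

theorem exists_localizationAway_ringHom_range_eq
    (h : AlgebraicIndependent k ![e₁, e₂, x, y])
    (hu : (u : S) = -(y ^ 2 - e₁ * y * x + e₂ * x ^ 2)) :
    ∃ φ : Localization.Away (MvPolynomial.X 3 ^ 2 - MvPolynomial.X 0 * MvPolynomial.X 3 *
        MvPolynomial.X 2 + MvPolynomial.X 1 * MvPolynomial.X 2 ^ 2 : MvPolynomial (Fin 4) k) →+* S,
      (∀ g, φ (algebraMap (MvPolynomial (Fin 4) k) _ g) = MvPolynomial.aeval ![e₁, e₂, x, y] g) ∧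
      Function.Injective φ ∧
      Set.range φ = Algebra.adjoin k ({e₁, e₂, x, y} ∪ {(u : S), ((u⁻¹ : Sˣ) : S)}) := by
  obtain ⟨φ, hφ, hinj, hrange⟩ := exists_localizationAway_ringHom (q := MvPolynomial.X 3 ^ 2 -
    MvPolynomial.X 0 * MvPolynomial.X 3 * MvPolynomial.X 2 +
    MvPolynomial.X 1 * MvPolynomial.X 2 ^ 2) (u := -u)
    (MvPolynomial.aeval ![e₁, e₂, x, y] : MvPolynomial (Fin 4) k →ₐ[k] S).toRingHom h
    (by simp [hu])
  have hadjoin : (MvPolynomial.aeval ![e₁, e₂, x, y]).range =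
      Algebra.adjoin k {e₁, e₂, x, y} := by
    rw [← Algebra.adjoin_range_eq_range_aeval]
    simp only [Matrix.range_cons, Matrix.range_empty, Set.union_empty, Set.singleton_union]
  refine ⟨φ, hφ, hinj, Set.ext fun r ↦ ?_⟩
  have hmem (a : S) : a ∈ Set.range (MvPolynomial.aeval (R := k) ![e₁, e₂, x, y]).toRingHom ↔
      a ∈ Algebra.adjoin k {e₁, e₂, x, y} := hadjoin ▸ Iff.rfl
  simp only [hrange, hmem, Units.val_neg, mul_neg_pow_mem_iff]
  exact (mem_adjoin_union_unit_inv_iff (val_mem_adjoin_of_eq_neg_normForm hu)).symm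

end NormForm

section FinsetForm

variable {k S ι : Type*} [CommRing k] [CommRing S] [Algebra k S]

theorem exists_finset_sum_of_mem_span_range {A : Subalgebra k S} {v : ι → S} {r : S}
    (hr : r ∈ Submodule.span A (Set.range v)) :
    ∃ (s : Finset ι) (c : ι → S), (∀ m ∈ s, c m ∈ A) ∧ r = ∑ m ∈ s, c m * v m := by
  obtain ⟨c, hc⟩ := Finsupp.mem_span_range_iff_exists_finsupp.mp hr
  exact ⟨c.support, fun m ↦ c m, fun m _ ↦ (c m).2, hc.symm⟩

theorem eq_zero_of_finset_sum_eq_zero {A : Subalgebra k S} {v : ι → S}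
    (hv : LinearIndependent A v) {s : Finset ι} {c : ι → S} (hc : ∀ m ∈ s, c m ∈ A)
    (hsum : ∑ m ∈ s, c m * v m = 0) {m : ι} (hm : m ∈ s) : c m = 0 := by
  classical
  let c' (m : ι) : A := if hm : m ∈ s then ⟨c m, hc m hm⟩ else 0
  have hc' {m : ι} (hm : m ∈ s) : (c' m : S) = c m := by simp [c', hm]
  have hzero : ∑ m ∈ s, c' m • v m = 0 := by
    rw [← hsum]
    exact Finset.sum_congr rfl fun m hm ↦ congrArg (· * v m) (hc' hm)
  rw [← hc' hm, linearIndependent_iff'.mp hv s c' hzero m hm, ZeroMemClass.coe_zero]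

end FinsetForm

theorem mem_adjoin_int_iff {S : Type*} [CommRing S] [alg : Algebra ℤ S] {s : Set S} {r : S} :
    r ∈ Algebra.adjoin ℤ s ↔ r ∈ Subring.closure s := by
  obtain rfl : alg = Ring.toIntAlgebra S := Subsingleton.elim _ _
  rw [Algebra.adjoin_int, mem_subalgebraOfSubring]

section SymmetricSeries

variable {K : Type*} [CommRing K]

theorem swapPS_eq_rename (f : MvPowerSeries (Fin 2) K) :
    swapPS f = rename (Equiv.swap (0 : Fin 2) 1) f := by
  ext d
  have hd : Finsupp.embDomain (Equiv.swap (0 : Fin 2) 1).toEmbedding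
      (Finsupp.equivMapDomain (Equiv.swap 0 1) d) = d := by
    rw [Finsupp.embDomain_eq_mapDomain]
    ext i
    simp
  conv_rhs => rw [← hd]
  exact (coeff_embDomain_rename (Equiv.swap (0 : Fin 2) 1).toEmbedding f _).symm

theorem swapPS_map {L : Type*} [CommRing L] (F : K →+* L) (f : MvPowerSeries (Fin 2) K) :
    swapPS (map F f) = map F (swapPS f) := by
  rw [swapPS_eq_rename, swapPS_eq_rename, rename_map]

instance isDomain_mvPowerSeries {σ K : Type*} [CommRing K] [IsDomain K] :
    IsDomain (MvPowerSeries σ K) :=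
  NoZeroDivisors.to_isDomain _

theorem X_zero_ne_X_one [Nontrivial K] : (X 0 : MvPowerSeries (Fin 2) K) ≠ X 1 := by
  simp [X_inj]

theorem exists_map_genericP_eq {P : MvPowerSeries (Fin 2) K} (hP : constantCoeff P = 1) :
    ∃ F : BetaRing →+* K, map F genericP = P := by
  let exponent (a b : ℕ) : Fin 2 →₀ ℕ := Finsupp.single 0 a + Finsupp.single 1 b
  refine ⟨(MvPolynomial.aeval fun ab ↦ coeff (exponent ab.1.1 ab.1.2) P).toRingHom, ?_⟩
  ext d
  have hd : exponent (d 0) (d 1) = d := by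
    ext i
    fin_cases i <;> simp [exponent]
  rw [coeff_map, show coeff d genericP = if h : (d 0, d 1) = (0, 0) then 1 else
    MvPolynomial.X ⟨(d 0, d 1), h⟩ from rfl]
  split_ifs with h
  · obtain ⟨h0, h1⟩ := Prod.mk.inj h
    rw [map_one, ← hd, h0, h1]
    simpa [exponent] using hP.symm
  · simp [hd]

theorem eq_sub_mul_of_sub_mul_eq {S : Type*} [CommRing S] [IsDomain S] {a b p p' r₀ r₁ : S}
    (hab : a ≠ b) (h₀ : (a - b) * r₀ = p - p') (h₁ : (a - b) * r₁ = a * p - b * p') :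
    p = r₁ - b * r₀ ∧ p' = r₁ - a * r₀ := by
  constructor <;> apply mul_left_cancel₀ (sub_ne_zero.mpr hab)
  · linear_combination b * h₀ - h₁
  · linear_combination a * h₀ - h₁

variable {ρ₀ ρ₁ : MvPowerSeries (Fin 2) BetaRing}

theorem exists_map_eq_and_map_eq_of_swapPS_eq [IsDomain K]
    (hρ₀ : (X 0 - X 1) * ρ₀ = genericP - swapPS genericP)
    (hρ₁ : (X 0 - X 1) * ρ₁ = X 0 * genericP - X 1 * swapPS genericP)
    {f₀ f₁ : MvPowerSeries (Fin 2) K} (hf₀ : swapPS f₀ = f₀) (hf₁ : swapPS f₁ = f₁)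
    (hf₁' : constantCoeff f₁ = 1) :
    ∃ F : BetaRing →+* K, map F ρ₀ = f₀ ∧ map F ρ₁ = f₁ := by
  obtain ⟨F, hF⟩ := exists_map_genericP_eq (P := f₁ - X 1 * f₀) (by simp [hf₁'])
  have hswap : swapPS (f₁ - X 1 * f₀) = f₁ - X 0 * f₀ := by
    rw [swapPS_eq_rename] at hf₀ hf₁ ⊢
    simp [hf₀, hf₁]
  have hsub : (X 0 - X 1 : MvPowerSeries (Fin 2) K) ≠ 0 := sub_ne_zero.mpr X_zero_ne_X_one
  refine ⟨F, mul_left_cancel₀ hsub ?_, mul_left_cancel₀ hsub ?_⟩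
  · have h := congrArg (map F) hρ₀
    simp only [map_mul, map_sub, map_X, ← swapPS_map, hF, hswap] at h
    linear_combination h
  · have h := congrArg (map F) hρ₁
    simp only [map_mul, map_sub, map_X, ← swapPS_map, hF, hswap] at h
    linear_combination h

end SymmetricSeries

section GenericIndependence

theorem algebraicIndependent_add_mul_X (K : Type*) [CommRing K] :
    AlgebraicIndependent K ![(X 0 + X 1 : MvPowerSeries (Fin 2) K), X 0 * X 1] := by
  have hesymm : AlgebraicIndependent K fun i : Fin 2 ↦ MvPolynomial.esymm (Fin 2) K (i + 1) := by
    have h := Subtype.val_injective.comp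
      (MvPolynomial.esymmAlgHom_injective (σ := Fin 2) K (n := 2) (by simp))
    rwa [show _ ∘ _ = _ from funext MvPolynomial.esymmAlgHom_apply] at h
  have hcoe : Function.Injective (MvPolynomial.coeToMvPowerSeries.algHom (σ := Fin 2) (R := K) K) :=
    MvPolynomial.coe_injective _ _
  convert hesymm.map' hcoe using 1
  ext i : 1
  fin_cases i
  · simp [MvPolynomial.esymm_one]
  · simp [MvPolynomial.esymm, show Finset.powersetCard 2 (Finset.univ : Finset (Fin 2)) =
      {Finset.univ} from rfl]

theorem algebraicIndependent_add_mul_X_C {R K : Type*} [CommRing R] [CommRing K] [Algebra R K]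
    {s t : K} (hst : AlgebraicIndependent R ![s, t]) :
    AlgebraicIndependent R ![(X 0 + X 1 : MvPowerSeries (Fin 2) K), X 0 * X 1, C s, C t] := by
  have hsum := hst.sumElim_comp (algebraicIndependent_add_mul_X K)
  refine (algebraicIndependent_equiv' (finSumFinEquiv (m := 2) (n := 2)) ?_).mp hsum
  ext i : 1
  rcases i with i | i <;> fin_cases i <;> rfl

theorem algebraicIndependent_quadruple_one_add_mul {k S : Type*} [CommRing k] [CommRing S]
    [IsDomain S] [Algebra k S] {e₁ e₂ x y : S} (he₁ : e₁ ≠ 0)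
    (h : AlgebraicIndependent k ![e₁, e₂, x, y]) :
    AlgebraicIndependent k ![e₁, e₂, x, 1 + e₁ * y] := by
  rw [algebraicIndependent_quadruple_iff] at h ⊢
  refine ⟨h.1, ?_⟩
  let a₁ : Algebra.adjoin k {e₁, e₂} := ⟨e₁, Algebra.subset_adjoin (Set.mem_insert _ _)⟩
  have ha₁ : a₁ ≠ 0 := fun h ↦ he₁ (congrArg Subtype.val h)
  have hlin : Transcendental (Algebra.adjoin k {e₁, e₂})
      (Polynomial.C a₁ * Polynomial.X + Polynomial.C 1) := by
    refine Polynomial.transcendental _ ?_ ?_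
    · rw [Polynomial.natDegree_linear ha₁]
      exact one_ne_zero
    · rw [Polynomial.leadingCoeff_linear ha₁]
      exact mem_nonZeroDivisors_of_ne_zero ha₁
  have hmap := h.2.polynomial_aeval_of_transcendental
    (f := ![Polynomial.X, Polynomial.C a₁ * Polynomial.X + Polynomial.C 1])
    (Fin.forall_fin_two.mpr ⟨Polynomial.transcendental_X _, hlin⟩)
  convert hmap using 1
  ext i : 1
  fin_cases i
  · simp
  · simp [a₁, add_comm]

theorem algebraicIndependent_E₁_E₂_ρ₀_ρ₁ [Algebra ℤ (MvPowerSeries (Fin 2) BetaRing)]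
    {ρ₀ ρ₁ : MvPowerSeries (Fin 2) BetaRing}
    (hρ₀ : (X 0 - X 1) * ρ₀ = genericP - swapPS genericP)
    (hρ₁ : (X 0 - X 1) * ρ₁ = X 0 * genericP - X 1 * swapPS genericP) :
    AlgebraicIndependent ℤ ![E₁, E₂, ρ₀, ρ₁] := by
  let e₁ : MvPowerSeries (Fin 2) (MvPolynomial (Fin 2) ℤ) := X 0 + X 1
  let s : MvPowerSeries (Fin 2) (MvPolynomial (Fin 2) ℤ) := C (MvPolynomial.X 0)
  let t : MvPowerSeries (Fin 2) (MvPolynomial (Fin 2) ℤ) := C (MvPolynomial.X 1)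
  obtain ⟨F, hF₀, hF₁⟩ := exists_map_eq_and_map_eq_of_swapPS_eq (f₀ := s) (f₁ := 1 + e₁ * t)
    hρ₀ hρ₁ (by simp [swapPS_eq_rename, s]) (by simp [swapPS_eq_rename, e₁, t, add_comm])
    (by simp [e₁])
  have hX : AlgebraicIndependent ℤ ![(MvPolynomial.X 0 : MvPolynomial (Fin 2) ℤ), .X 1] := by
    convert MvPolynomial.algebraicIndependent_X (Fin 2) ℤ using 1
    ext i : 1
    fin_cases i <;> rfl
  have hind : AlgebraicIndependent ℤ ![e₁, X 0 * X 1, s, t] :=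
    algebraicIndependent_add_mul_X_C hX
  refine .of_ringHom_of_comp_eq (RingHom.id ℤ) (map F) ?_ Function.injective_id
    (RingHom.ext_int _ _)
  convert algebraicIndependent_quadruple_one_add_mul (hind.ne_zero 0) hind using 1
  ext i : 1
  fin_cases i
  · simp [E₁, e₁]
  · simp [E₂]
  · exact hF₀
  · exact hF₁

end GenericIndependence

theorem stmt14 (ρ₀ ρ₁ : MvPowerSeries (Fin 2) BetaRing)
    (hρ₀ : ((X 0 : MvPowerSeries (Fin 2) BetaRing) - X 1) * ρ₀ = genericP - swapPS genericP)
    (hρ₁ : ((X 0 : MvPowerSeries (Fin 2) BetaRing) - X 1) * ρ₁ =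
      (X 0 : MvPowerSeries (Fin 2) BetaRing) * genericP -
        (X 1 : MvPowerSeries (Fin 2) BetaRing) * swapPS genericP)
    -- `ρ = −p(x₁,x₂)·p(x₂,x₁)`, a unit `u`
    (u : (MvPowerSeries (Fin 2) BetaRing)ˣ)
    (hu : (u : MvPowerSeries (Fin 2) BetaRing) = -(genericP * swapPS genericP)) :
    -- `A = ℤ[E₁,E₂]` and `R = ⟨E₁, E₂, ρ₀, ρ₁, ρ, ρ⁻¹⟩`
    let A : Subring (MvPowerSeries (Fin 2) BetaRing) := Subring.closure {E₁, E₂}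
    let Rsub : Subring (MvPowerSeries (Fin 2) BetaRing) :=
      Subring.closure {E₁, E₂, ρ₀, ρ₁, (u : MvPowerSeries (Fin 2) BetaRing),
        ((u⁻¹ : (MvPowerSeries (Fin 2) BetaRing)ˣ) : MvPowerSeries (Fin 2) BetaRing)}
    -- the family 𝓑 spans `R` over `ℤ[E₁,E₂]` …
    (∀ r ∈ Rsub, ∃ (s : Finset (Fin 2 × ℕ × ℤ)) (c : Fin 2 × ℕ × ℤ → MvPowerSeries (Fin 2) BetaRing),
      (∀ m ∈ s, c m ∈ A) ∧
      r = ∑ m ∈ s, c m * ρ₁ ^ (m.1 : ℕ) * ρ₀ ^ m.2.1 *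
        ((u ^ m.2.2 : (MvPowerSeries (Fin 2) BetaRing)ˣ) : MvPowerSeries (Fin 2) BetaRing)) ∧
    -- … and is linearly independent over `ℤ[E₁,E₂]`
    (∀ (s : Finset (Fin 2 × ℕ × ℤ)) (c : Fin 2 × ℕ × ℤ → MvPowerSeries (Fin 2) BetaRing),
      (∀ m ∈ s, c m ∈ A) →
      ∑ m ∈ s, c m * ρ₁ ^ (m.1 : ℕ) * ρ₀ ^ m.2.1 *
        ((u ^ m.2.2 : (MvPowerSeries (Fin 2) BetaRing)ˣ) : MvPowerSeries (Fin 2) BetaRing) = 0 →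
      ∀ m ∈ s, c m = 0) ∧
    -- `R` is the localization of `ℤ[E₁,E₂,ρ₀,ρ₁]` at `ρ₁² − E₁ρ₁ρ₀ + E₂ρ₀²` via the natural map
    (∃ φ : Localization.Away
        ((MvPolynomial.X 3) ^ 2 - MvPolynomial.X 0 * MvPolynomial.X 3 * MvPolynomial.X 2 +
          MvPolynomial.X 1 * (MvPolynomial.X 2) ^ 2 : MvPolynomial (Fin 4) ℤ) →+*
        MvPowerSeries (Fin 2) BetaRing,
      (∀ g : MvPolynomial (Fin 4) ℤ,
        φ (algebraMap (MvPolynomial (Fin 4) ℤ) _ g) = MvPolynomial.aeval ![E₁, E₂, ρ₀, ρ₁] g) ∧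
      Function.Injective φ ∧
      Set.range φ = (Rsub : Set (MvPowerSeries (Fin 2) BetaRing))) := by
  intro A Rsub
  obtain ⟨hp, hp'⟩ := eq_sub_mul_of_sub_mul_eq X_zero_ne_X_one hρ₀ hρ₁
  have hu' : (u : MvPowerSeries (Fin 2) BetaRing) =
      -(ρ₁ ^ 2 - E₁ * ρ₁ * ρ₀ + E₂ * ρ₀ ^ 2) := by
    rw [hu, hp', hp, E₁, E₂]
    ring
  have hind := algebraicIndependent_E₁_E₂_ρ₀_ρ₁ hρ₀ hρ₁
  have hA (r) : r ∈ A ↔ r ∈ Algebra.adjoin ℤ {E₁, E₂} := mem_adjoin_int_iff.symm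
  have hR (r) : r ∈ Rsub ↔ r ∈ Algebra.adjoin ℤ ({E₁, E₂, ρ₀, ρ₁} ∪ {↑u, ↑u⁻¹}) := by
    simp only [mem_adjoin_int_iff, Set.insert_union, Set.singleton_union, Rsub]
  have hfamily (c) (m : Fin 2 × ℕ × ℤ) : c * ρ₁ ^ (m.1 : ℕ) * ρ₀ ^ m.2.1 * ↑(u ^ m.2.2) =
      c * adicFamily 2 ρ₀ ρ₁ u m := by
    simp only [adicFamily, mul_assoc]
  simp only [hfamily, hA]
  refine ⟨fun r hr ↦ ?_, fun s c hc hsum m hm ↦ ?_, ?_⟩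
  · exact exists_finset_sum_of_mem_span_range
      (mem_span_adicFamily_of_mem_adjoin hu' ((hR r).mp hr))
  · exact eq_zero_of_finset_sum_eq_zero
      (linearIndependent_adicFamily_of_eq_neg_normForm hind hu') hc hsum hm
  · obtain ⟨φ, hφ, hinj, hrange⟩ := exists_localizationAway_ringHom_range_eq hind hu'
    exact ⟨φ, hφ, hinj, hrange.trans (Set.ext fun r ↦ (hR r).symm)⟩
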